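/- Let s ∈ (0, 1), n > 2s an integer, and let Ω ⊂ ℝⁿ be a nonempty bounded open set. Then there exists a constant C > 0 such that for every measurable function u : ℝⁿ → ℝ with u = 0 a.e. on ℝⁿ \ Ω, ∫_Ω |u(x)|² dx ≤ C ∫_{ℝⁿ}∫_{ℝⁿ} |u(x) − u(y)|² / |x − y|^{n+2s} dx dy, where both sides are Lebesgue integrals with values in [0, ∞]. -/

import Mathlib

open MeasureTheory ENNReal

/-- **Fractional Poincaré-type inequality** for functions vanishing outside a
bounded open set. -/
theorem stmt_6 (n : ℕ) (s : ℝ) (hs : 0 < s) (hs1 : s < 1) (hns : 2 * s < (n : ℝ))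
    (Ω : Set (EuclideanSpace ℝ (Fin n))) (hΩo : IsOpen Ω)
    (hΩb : Bornology.IsBounded Ω) (hΩne : Ω.Nonempty) :
    ∃ C : ℝ, 0 < C ∧ ∀ u : EuclideanSpace ℝ (Fin n) → ℝ, Measurable u →
      (∀ᵐ x, x ∉ Ω → u x = 0) →
      (∫⁻ x in Ω, ENNReal.ofReal (|u x| ^ 2)) ≤
        ENNReal.ofReal C *
          ∫⁻ x, ∫⁻ y, ENNReal.ofReal (|u x - u y| ^ 2 / dist x y ^ ((n : ℝ) + 2 * s)) := by
  have hn : 0 < n := by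
    have : (0 : ℝ) < n := by linarith
    exact_mod_cast this
  obtain ⟨R, hR0, hR⟩ := hΩb.exists_pos_norm_lt
  set p : EuclideanSpace ℝ (Fin n) := EuclideanSpace.single ⟨0, hn⟩ (R + 1) with hp
  have hpn : ‖p‖ = R + 1 := by
    rw [hp, EuclideanSpace.norm_single, Real.norm_eq_abs, abs_of_pos (by linarith)]
  set B := Metric.ball p 1 with hB
  set a : ℝ := (n : ℝ) + 2 * s with ha
  have ha0 : 0 < a := by positivity
  set D : ℝ := 2 * R + 2 with hD
  have hD0 : 0 < D := by positivity
  have hDa : 0 < D ^ a := Real.rpow_pos_of_pos hD0 a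
  have hV0 : volume B ≠ 0 := (Metric.measure_ball_pos volume p one_pos).ne'
  have hVt : volume B ≠ ∞ := measure_ball_lt_top.ne
  have hV : 0 < (volume B).toReal := ENNReal.toReal_pos hV0 hVt
  have hyn : ∀ y ∈ B, R < ‖y‖ ∧ ‖y‖ < R + 2 := by
    intro y hy
    have h1 : ‖y - p‖ < 1 := by simpa [hB, dist_eq_norm] using hy
    have h2 := abs_norm_sub_norm_le y p
    rw [hpn, abs_le] at h2
    constructor <;> linarith [h2.1, h2.2]
  refine ⟨D ^ a / (volume B).toReal, by positivity, fun u hu hu0 => ?_⟩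
  have key : ∀ x ∈ Ω, ENNReal.ofReal (|u x| ^ 2) ≤
      ENNReal.ofReal (D ^ a / (volume B).toReal) *
        ∫⁻ y, ENNReal.ofReal (|u x - u y| ^ 2 / dist x y ^ a) := by
    intro x hx
    have hxR := hR x hx
    have h1 : ENNReal.ofReal (|u x| ^ 2 / D ^ a) * volume B ≤
        ∫⁻ y, ENNReal.ofReal (|u x - u y| ^ 2 / dist x y ^ a) := by
      rw [← setLIntegral_const]
      refine le_trans ?_ (setLIntegral_le_lintegral B _)
      refine lintegral_mono_ae ?_
      filter_upwards [ae_restrict_of_ae hu0, ae_restrict_mem measurableSet_ball] with y hy hyB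
      obtain ⟨h3, h4⟩ := hyn y hyB
      have hyΩ : y ∉ Ω := fun h => absurd (hR y h) (by linarith)
      rw [hy hyΩ, sub_zero]
      have hd0 : 0 < dist x y := dist_pos.2 (fun h => hyΩ (h ▸ hx))
      have hd : dist x y ≤ D := by
        have := dist_le_norm_add_norm x y
        linarith
      apply ENNReal.ofReal_le_ofReal
      have := Real.rpow_pos_of_pos hd0 a
      have := Real.rpow_le_rpow hd0.le hd ha0.le
      gcongr
    refine le_trans (le_of_eq ?_) (mul_le_mul_right h1 _)
    rw [← ENNReal.ofReal_toReal hVt, ENNReal.toReal_ofReal hV.le,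
      ← ENNReal.ofReal_mul (by positivity), ← ENNReal.ofReal_mul (by positivity)]
    congr 1
    field_simp
  calc _ ≤ ∫⁻ x in Ω, ENNReal.ofReal (D ^ a / (volume B).toReal) *
        ∫⁻ y, ENNReal.ofReal (|u x - u y| ^ 2 / dist x y ^ a) :=
        setLIntegral_mono' hΩo.measurableSet key
    _ ≤ ∫⁻ x, ENNReal.ofReal (D ^ a / (volume B).toReal) *
        ∫⁻ y, ENNReal.ofReal (|u x - u y| ^ 2 / dist x y ^ a) := setLIntegral_le_lintegral _ _
    _ = _ := lintegral_const_mul' _ _ ENNReal.ofReal_ne_top
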